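/- arXiv:2503.16754 — 2 statements merged into one kernel-verified Lean document; each statement's English description precedes it below -/
import Mathlib

section
/- Consider one Consensus ALADIN iteration with constant matrices for the consensus problem. Suppose each f_i is differentiable and m-strongly convex with m > 0, (z*, λ*) is a KKT point, and the input dual variables satisfy Σ_i λ_i = 0. Then L(z⁺, λ⁺) ≤ L(z, λ) − 4m Σ_{i=1}^N ‖x_i⁺ − z*‖². -/
open Matrix Finset

/-!
Measure errors from the KKT point: `a = z - z*`, `a⁺ = z⁺ - z*`, `pᵢ = xᵢ⁺ - z*`,
`dᵢ = gᵢ + λᵢ*`. The errors of the multipliers sum to zero both before and after the step, so the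
cross terms vanish when the squares are completed, which gives
`L(z, λ) = ∑ᵢ ‖λᵢ - λᵢ* - Bᵢ a‖²` and `L(z⁺, λ⁺) = ∑ᵢ ‖λᵢ⁺ - λᵢ* + Bᵢ a⁺‖²` in the norms of `Bᵢ⁻¹`.
The updates turn the two vectors into `-(Bᵢ pᵢ + dᵢ)` and `Bᵢ pᵢ - dᵢ`, so the energy drops by
exactly `4 ∑ᵢ pᵢᵀ dᵢ`. Optimality of `xᵢ⁺` says `gᵢ = ∇fᵢ(xᵢ⁺)`, whence
`dᵢ = ∇fᵢ(xᵢ⁺) - ∇fᵢ(z*)`, and strong monotonicity of the gradient bounds `pᵢᵀ dᵢ` below by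
`m ‖pᵢ‖²`.
-/

section Algebra

variable {ι κ R : Type*} [Fintype κ] [CommRing R]

/-- The quadratic form `v ↦ vᵀ M v`, written `‖v‖²_M` when `M` is positive definite. -/
def quadForm (M : Matrix κ κ R) (v : κ → R) : R :=
  v ⬝ᵥ (M *ᵥ v)

lemma dotProduct_mulVec_comm_of_isSymm {M : Matrix κ κ R} (hM : M.IsSymm) (u v : κ → R) :
    u ⬝ᵥ (M *ᵥ v) = v ⬝ᵥ (M *ᵥ u) := by
  rw [dotProduct_mulVec, ← mulVec_transpose, hM.eq, dotProduct_comm]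

lemma quadForm_add {M : Matrix κ κ R} (hM : M.IsSymm) (u v : κ → R) :
    quadForm M (u + v) = quadForm M u + 2 * (u ⬝ᵥ (M *ᵥ v)) + quadForm M v := by
  simp only [quadForm, mulVec_add, dotProduct_add, add_dotProduct,
    dotProduct_mulVec_comm_of_isSymm hM v u]
  ring

lemma quadForm_neg (M : Matrix κ κ R) (v : κ → R) : quadForm M (-v) = quadForm M v := by
  simp only [quadForm, mulVec_neg, neg_dotProduct_neg]

lemma quadForm_smul (M : Matrix κ κ R) (t : R) (v : κ → R) :
    quadForm M (t • v) = t ^ 2 * quadForm M v := by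
  simp only [quadForm, mulVec_smul, smul_dotProduct, dotProduct_smul, smul_eq_mul]
  ring

variable [DecidableEq κ]

lemma quadForm_inv_add_mulVec {B : Matrix κ κ R} (hB : B.IsSymm) (hB_unit : IsUnit B)
    (u v : κ → R) :
    quadForm B⁻¹ (u + B *ᵥ v) = quadForm B⁻¹ u + 2 * (u ⬝ᵥ v) + quadForm B v := by
  have inv_mulVec : B⁻¹ *ᵥ (B *ᵥ v) = v := by
    rw [mulVec_mulVec, nonsing_inv_mul _ ((isUnit_iff_isUnit_det B).1 hB_unit), one_mulVec]
  have quadForm_image : quadForm B⁻¹ (B *ᵥ v) = quadForm B v := by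
    rw [quadForm, inv_mulVec, dotProduct_comm, quadForm]
  rw [quadForm_add hB.inv, inv_mulVec, quadForm_image]

lemma quadForm_inv_mulVec_sub {B : Matrix κ κ R} (hB : B.IsSymm) (hB_unit : IsUnit B)
    (v d : κ → R) :
    quadForm B⁻¹ (B *ᵥ v - d) = quadForm B⁻¹ (B *ᵥ v + d) - 4 * (v ⬝ᵥ d) := by
  rw [← neg_add_eq_sub, add_comm (B *ᵥ v) d, quadForm_inv_add_mulVec hB hB_unit,
    quadForm_inv_add_mulVec hB hB_unit, quadForm_neg, neg_dotProduct, dotProduct_comm d v]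
  ring

variable [Fintype ι]

lemma sum_quadForm_inv_add_mulVec {B : ι → Matrix κ κ R} (hB : ∀ i, (B i).IsSymm)
    (hB_unit : ∀ i, IsUnit (B i)) {μ : ι → κ → R} (hμ : ∑ i, μ i = 0) (v : κ → R) :
    ∑ i, quadForm (B i)⁻¹ (μ i + B i *ᵥ v) =
      ∑ i, (quadForm (B i)⁻¹ (μ i) + quadForm (B i) v) := by
  have cross_term : ∑ i, μ i ⬝ᵥ v = 0 := by rw [← sum_dotProduct, hμ, zero_dotProduct]
  simp only [quadForm_inv_add_mulVec (hB _) (hB_unit _), sum_add_distrib, ← mul_sum, cross_term,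
    mul_zero, add_zero]

/-- The energy function `L(z, λ) = ∑ᵢ (‖λᵢ - λᵢ*‖²_{Bᵢ⁻¹} + ‖z - z*‖²_{Bᵢ})` by which Consensus
ALADIN measures the distance of `(z, λ)` to the KKT point `(z*, λ*)`. -/
noncomputable def aladinEnergy (B : ι → Matrix κ κ R) (zstar : κ → R) (lamstar : ι → κ → R)
    (z : κ → R) (lam : ι → κ → R) : R :=
  ∑ i, (quadForm (B i)⁻¹ (lam i - lamstar i) + quadForm (B i) (z - zstar))

/-- The part of a Consensus ALADIN iteration that follows the local minimizations: the recovered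
gradients `g`, the global update `zp` of `z` and the dual update `lamp` of `lam`. The outcomes `xp`
of the local minimizations are arbitrary here. -/
structure IsAladinUpdate (B : ι → Matrix κ κ R) (z : κ → R) (lam xp g : ι → κ → R)
    (zp : κ → R) (lamp : ι → κ → R) : Prop where
  gradient_eq : ∀ i, g i = B i *ᵥ (z - xp i) - lam i
  global_eq : zp = (∑ i, B i)⁻¹ *ᵥ ∑ i, (B i *ᵥ xp i - g i)
  dual_eq : ∀ i, lamp i = B i *ᵥ (xp i - zp) - g i

namespace IsAladinUpdate

variable {B : ι → Matrix κ κ R} {z zp : κ → R} {lam xp g lamp : ι → κ → R}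

lemma sum_dual_eq_zero (h : IsAladinUpdate B z lam xp g zp lamp) (hsum_unit : IsUnit (∑ i, B i)) :
    ∑ i, lamp i = 0 := by
  have global_balance : (∑ i, B i) *ᵥ zp = ∑ i, (B i *ᵥ xp i - g i) := by
    rw [h.global_eq, mulVec_mulVec, mul_nonsing_inv _ ((isUnit_iff_isUnit_det _).1 hsum_unit),
      one_mulVec]
  calc ∑ i, lamp i = ∑ i, ((B i *ᵥ xp i - g i) - B i *ᵥ zp) :=
        sum_congr rfl fun i _ => by rw [h.dual_eq, mulVec_sub, sub_right_comm]
    _ = 0 := by rw [sum_sub_distrib, ← global_balance, sum_mulVec, sub_self]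

theorem aladinEnergy_eq (h : IsAladinUpdate B z lam xp g zp lamp) (hB : ∀ i, (B i).IsSymm)
    (hB_unit : ∀ i, IsUnit (B i)) (hsum_unit : IsUnit (∑ i, B i)) (zstar : κ → R)
    {lamstar : ι → κ → R} (hlamstar : ∑ i, lamstar i = 0) (hlam : ∑ i, lam i = 0) :
    aladinEnergy B zstar lamstar zp lamp = aladinEnergy B zstar lamstar z lam -
      4 * ∑ i, (xp i - zstar) ⬝ᵥ (g i + lamstar i) := by
  have before : aladinEnergy B zstar lamstar z lam =
      ∑ i, quadForm (B i)⁻¹ (B i *ᵥ (xp i - zstar) + (g i + lamstar i)) := by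
    have error_sum : ∑ i, (lam i - lamstar i) = 0 := by
      rw [sum_sub_distrib, hlam, hlamstar, sub_zero]
    have error_eq (i : ι) : lam i - lamstar i + B i *ᵥ -(z - zstar) =
        -(B i *ᵥ (xp i - zstar) + (g i + lamstar i)) := by
      rw [h.gradient_eq]
      simp only [mulVec_sub, mulVec_neg]
      abel
    have completed := sum_quadForm_inv_add_mulVec hB hB_unit error_sum (-(z - zstar))
    simpa only [aladinEnergy, error_eq, quadForm_neg] using completed.symm
  have after : aladinEnergy B zstar lamstar zp lamp =
      ∑ i, quadForm (B i)⁻¹ (B i *ᵥ (xp i - zstar) - (g i + lamstar i)) := by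
    have error_sum : ∑ i, (lamp i - lamstar i) = 0 := by
      rw [sum_sub_distrib, h.sum_dual_eq_zero hsum_unit, hlamstar, sub_zero]
    have error_eq (i : ι) : lamp i - lamstar i + B i *ᵥ (zp - zstar) =
        B i *ᵥ (xp i - zstar) - (g i + lamstar i) := by
      rw [h.dual_eq]
      simp only [mulVec_sub]
      abel
    have completed := sum_quadForm_inv_add_mulVec hB hB_unit error_sum (zp - zstar)
    simpa only [aladinEnergy, error_eq] using completed.symm
  rw [before, after]
  simp only [quadForm_inv_mulVec_sub (hB _) (hB_unit _), sum_sub_distrib, ← mul_sum]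

end IsAladinUpdate

end Algebra

section Analysis

variable {ι κ : Type*} [Fintype κ]

lemma mul_dotProduct_self_le_dotProduct_gradient_sub {m : ℝ} {f : (κ → ℝ) → ℝ}
    {gradf : (κ → ℝ) → κ → ℝ}
    (hsc : ∀ x y, f x + gradf x ⬝ᵥ (y - x) + m / 2 * ((y - x) ⬝ᵥ (y - x)) ≤ f y) (x y : κ → ℝ) :
    m * ((x - y) ⬝ᵥ (x - y)) ≤ (x - y) ⬝ᵥ (gradf x - gradf y) := by
  have at_x := hsc x y
  have at_y := hsc y x
  rw [← neg_sub x y, neg_dotProduct_neg, dotProduct_neg] at at_x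
  rw [dotProduct_comm _ (gradf x - gradf y), sub_dotProduct (gradf x)]
  linarith

lemma hasLineDerivAt_dotProduct (l x y : κ → ℝ) : HasLineDerivAt ℝ (l ⬝ᵥ ·) (l ⬝ᵥ y) x y := by
  have along_line : (fun t : ℝ => l ⬝ᵥ (x + t • y)) = fun t => l ⬝ᵥ x + t * (l ⬝ᵥ y) := by
    funext t
    rw [dotProduct_add, dotProduct_smul, smul_eq_mul]
  rw [HasLineDerivAt, along_line]
  simpa using ((hasDerivAt_id (0 : ℝ)).mul_const (l ⬝ᵥ y)).const_add (l ⬝ᵥ x)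

lemma hasLineDerivAt_quadForm_sub {M : Matrix κ κ ℝ} (hM : M.IsSymm) (z x y : κ → ℝ) :
    HasLineDerivAt ℝ (fun w => quadForm M (w - z)) (2 * ((M *ᵥ (x - z)) ⬝ᵥ y)) x y := by
  have along_line : (fun t : ℝ => quadForm M (x + t • y - z)) = fun t =>
      quadForm M (x - z) + t * (2 * ((M *ᵥ (x - z)) ⬝ᵥ y)) + t ^ 2 * quadForm M y := by
    funext t
    rw [add_sub_right_comm, quadForm_add hM, quadForm_smul, mulVec_smul, dotProduct_smul,
      dotProduct_mulVec_comm_of_isSymm hM, dotProduct_comm y, smul_eq_mul]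
    ring
  rw [HasLineDerivAt, along_line]
  simpa using (((hasDerivAt_id (0 : ℝ)).mul_const _).const_add (quadForm M (x - z))).fun_add
    ((hasDerivAt_pow 2 (0 : ℝ)).mul_const (quadForm M y))

lemma mulVec_sub_eq_gradient_of_isLocalMin {M : Matrix κ κ ℝ} (hM : M.IsSymm)
    {f : (κ → ℝ) → ℝ} {G l x z : κ → ℝ} (hf : ∀ y, HasLineDerivAt ℝ f (G ⬝ᵥ y) x y)
    (hmin : IsLocalMin (fun w => f w + l ⬝ᵥ w + (1 / 2 : ℝ) * quadForm M (w - z)) x) :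
    M *ᵥ (z - x) - l = G := by
  refine dotProduct_eq _ _ fun y => ?_
  have stationary : G ⬝ᵥ y + l ⬝ᵥ y + (1 / 2 : ℝ) * (2 * ((M *ᵥ (x - z)) ⬝ᵥ y)) = 0 :=
    hmin.hasLineDerivAt_eq_zero (HasDerivAt.add (HasDerivAt.add (hf y)
      (hasLineDerivAt_dotProduct l x y)) ((hasLineDerivAt_quadForm_sub hM z x y).const_mul _))
  rw [← neg_sub x z, mulVec_neg, sub_dotProduct, neg_dotProduct]
  linarith

theorem stmt_1_general [DecidableEq κ] [Fintype ι] {m : ℝ} {f : ι → (κ → ℝ) → ℝ}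
    {gradf : ι → (κ → ℝ) → κ → ℝ}
    (hgrad : ∀ i x y, HasLineDerivAt ℝ (f i) (gradf i x ⬝ᵥ y) x y)
    (hsc : ∀ i x y, f i x + gradf i x ⬝ᵥ (y - x) + m / 2 * ((y - x) ⬝ᵥ (y - x)) ≤ f i y)
    {B : ι → Matrix κ κ ℝ} (hB : ∀ i, (B i).IsSymm) (hB_unit : ∀ i, IsUnit (B i))
    (hsum_unit : IsUnit (∑ i, B i))
    {zstar : κ → ℝ} {lamstar : ι → κ → ℝ} (hstationary : ∀ i, gradf i zstar + lamstar i = 0)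
    (hlamstar : ∑ i, lamstar i = 0)
    {z : κ → ℝ} {lam : ι → κ → ℝ} (hlam : ∑ i, lam i = 0) {xp : ι → κ → ℝ}
    (hxp : ∀ i, IsLocalMin
      (fun x => f i x + lam i ⬝ᵥ x + (1 / 2 : ℝ) * quadForm (B i) (x - z)) (xp i))
    {g : ι → κ → ℝ} {zp : κ → ℝ} {lamp : ι → κ → ℝ}
    (hupdate : IsAladinUpdate B z lam xp g zp lamp) :
    aladinEnergy B zstar lamstar zp lamp ≤ aladinEnergy B zstar lamstar z lam -
      4 * m * ∑ i, (xp i - zstar) ⬝ᵥ (xp i - zstar) := by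
  have gradient_recovery (i : ι) : g i = gradf i (xp i) :=
    (hupdate.gradient_eq i).trans
      (mulVec_sub_eq_gradient_of_isLocalMin (hB i) (hgrad i (xp i)) (hxp i))
  have gradient_gap (i : ι) : g i + lamstar i = gradf i (xp i) - gradf i zstar := by
    rw [gradient_recovery, eq_neg_of_add_eq_zero_right (hstationary i), sub_eq_add_neg]
  have monotone_sum : m * ∑ i, (xp i - zstar) ⬝ᵥ (xp i - zstar) ≤
      ∑ i, (xp i - zstar) ⬝ᵥ (g i + lamstar i) := by
    rw [mul_sum]
    refine sum_le_sum fun i _ => ?_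
    rw [gradient_gap]
    exact mul_dotProduct_self_le_dotProduct_gradient_sub (hsc i) (xp i) zstar
  rw [hupdate.aladinEnergy_eq hB hB_unit hsum_unit zstar hlamstar hlam]
  linarith

end Analysis

/-- One Consensus ALADIN iteration with constant matrices for the
consensus problem: if each `fᵢ` is differentiable and `m`-strongly convex (`m > 0`),
`(z*, λ*)` is a KKT point, and `Σᵢ λᵢ = 0`, then
`L(z⁺, λ⁺) ≤ L(z, λ) − 4m Σᵢ ‖xᵢ⁺ − z*‖²`. -/
theorem stmt_1 {n N : ℕ} (hN : 0 < N) (m : ℝ) (hm : 0 < m)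
    (f : Fin N → (Fin n → ℝ) → ℝ)
    (gradf : Fin N → (Fin n → ℝ) → (Fin n → ℝ))
    (hdiff : ∀ i, Differentiable ℝ (f i))
    (hgrad : ∀ i x y, fderiv ℝ (f i) x y = gradf i x ⬝ᵥ y)
    -- m-strong convexity: f(y) ≥ f(x) + ∇f(x)ᵀ(y − x) + (m/2)‖y − x‖²
    (hsc : ∀ i x y, f i x + gradf i x ⬝ᵥ (y - x) + m / 2 * ((y - x) ⬝ᵥ (y - x)) ≤ f i y)
    (B : Fin N → Matrix (Fin n) (Fin n) ℝ)
    (hB : ∀ i, (B i).PosDef)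
    -- KKT point (z*, λ*)
    (zstar : Fin n → ℝ) (lamstar : Fin N → Fin n → ℝ)
    (hKKT1 : ∀ i, gradf i zstar + lamstar i = 0)
    (hKKT2 : ∑ i, lamstar i = 0)
    -- energy function
    (L : (Fin n → ℝ) → (Fin N → Fin n → ℝ) → ℝ)
    (hL : ∀ w μ, L w μ = ∑ i, ((μ i - lamstar i) ⬝ᵥ ((B i)⁻¹ *ᵥ (μ i - lamstar i))
        + (w - zstar) ⬝ᵥ ((B i) *ᵥ (w - zstar))))
    -- current iterate (z, λ) with Σᵢ λᵢ = 0
    (z : Fin n → ℝ) (lam : Fin N → Fin n → ℝ)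
    (hlam : ∑ i, lam i = 0)
    -- the iteration: xᵢ⁺ is the global minimizer of the local subproblem
    (xp : Fin N → Fin n → ℝ)
    (hxp : ∀ i x, f i (xp i) + lam i ⬝ᵥ xp i
          + (1 / 2 : ℝ) * ((xp i - z) ⬝ᵥ ((B i) *ᵥ (xp i - z)))
        ≤ f i x + lam i ⬝ᵥ x + (1 / 2 : ℝ) * ((x - z) ⬝ᵥ ((B i) *ᵥ (x - z))))
    -- gradient recovery, global update and dual update
    (g : Fin N → Fin n → ℝ)
    (hg : ∀ i, g i = (B i) *ᵥ (z - xp i) - lam i)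
    (zp : Fin n → ℝ)
    (hzp : zp = (∑ i, B i)⁻¹ *ᵥ (∑ i, ((B i) *ᵥ xp i - g i)))
    (lamp : Fin N → Fin n → ℝ)
    (hlamp : ∀ i, lamp i = (B i) *ᵥ (xp i - zp) - g i) :
    L zp lamp ≤ L z lam - 4 * m * ∑ i, ((xp i - zstar) ⬝ᵥ (xp i - zstar)) := by
  have : Nonempty (Fin N) := ⟨⟨0, hN⟩⟩
  rw [hL, hL]
  exact stmt_1_general (fun i x y => hgrad i x y ▸ (hdiff i x).hasFDerivAt.hasLineDerivAt y) hsc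
    (fun i => isHermitian_iff_isSymm.1 (hB i).isHermitian) (fun i => (hB i).isUnit)
    (posDef_sum univ_nonempty fun i _ => hB i).isUnit hKKT1 hKKT2 hlam
    (fun i => .of_forall (hxp i)) ⟨hg, hzp, hlamp⟩
end

section
/- Let f_1, …, f_N : ℝⁿ → ℝ be differentiable and m-strongly convex with m > 0, (z*, λ*) a KKT point of the consensus problem, B_1, …, B_N symmetric positive definite n×n matrices, and λ_1, …, λ_N, z ∈ ℝⁿ. For each i let x_i⁺ be the global minimizer of x ↦ f_i(x) + λ_iᵀx + ½‖x − z‖²_{B_i}. Then Σ_{i=1}^N (λ_i − λ_i* + B_i(x_i⁺ − z))ᵀ(x_i⁺ − z*) ≤ −m Σ_{i=1}^N ‖x_i⁺ − z*‖². -/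
open Matrix Finset

/-!
Stationarity of the proximal step identifies the functional `λᵢ + Bᵢ(xᵢ⁺ − z)` with `−∇fᵢ(xᵢ⁺)`,
and the KKT conditions identify `λᵢ*` with `−∇fᵢ(z*)`. Each summand is therefore
`−(∇fᵢ(xᵢ⁺) − ∇fᵢ(z*))ᵀ(xᵢ⁺ − z*)`, which strong monotonicity of the gradient bounds by
`−m ‖xᵢ⁺ − z*‖²`. Stationarity only needs derivatives along lines, so neither a norm nor
coordinates enter this argument.
-/

section LineDerivative

variable {𝕜 E F : Type*} [NontriviallyNormedField 𝕜] [AddCommGroup E] [Module 𝕜 E]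
  [NormedAddCommGroup F] [NormedSpace 𝕜 F]

theorem hasLineDerivAt_linearMap (L : E →ₗ[𝕜] F) (x v : E) : HasLineDerivAt 𝕜 L (L v) x v := by
  have hline : HasDerivAt (fun t : 𝕜 => L x + t • L v) (L v) 0 := by
    simpa only [id_eq, one_smul] using ((hasDerivAt_id (0 : 𝕜)).smul_const (L v)).const_add (L x)
  simpa only [HasLineDerivAt, map_add, map_smul] using hline

theorem hasLineDerivAt_bilinMap_sub_self (B : LinearMap.BilinMap 𝕜 E F) (z x v : E) :
    HasLineDerivAt 𝕜 (fun y => B (y - z) (y - z)) (B (x - z) v + B v (x - z)) x v := by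
  have hquad : HasDerivAt
      (fun t : 𝕜 => B (x - z) (x - z) + t • (B (x - z) v + B v (x - z)) + t ^ 2 • B v v)
      (B (x - z) v + B v (x - z)) 0 := by
    simpa using (((hasDerivAt_id (0 : 𝕜)).smul_const (B (x - z) v + B v (x - z))).const_add
      (B (x - z) (x - z))).fun_add ((hasDerivAt_pow 2 (0 : 𝕜)).smul_const (B v v))
  refine hquad.congr_of_eventuallyEq (Filter.Eventually.of_forall fun t => ?_)
  simp only [add_sub_right_comm x (t • v) z, map_add, map_smul, LinearMap.add_apply,
    LinearMap.smul_apply]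
  module

end LineDerivative

section Proximal

variable {E : Type*} [AddCommGroup E] [Module ℝ E]

theorem stationary_of_isMinOn_proximal {f : E → ℝ} {f' ℓ : Module.Dual ℝ E}
    {B : LinearMap.BilinForm ℝ E} (hB : B.IsSymm) {z x : E}
    (hf : ∀ v, HasLineDerivAt ℝ f (f' v) x v)
    (hmin : IsMinOn (fun y => f y + ℓ y + 1 / 2 * B (y - z) (y - z)) Set.univ x) :
    f' + ℓ + B (x - z) = 0 := by
  ext v
  have hderiv := ((hf v).add (hasLineDerivAt_linearMap ℓ x v)).add
    ((hasLineDerivAt_bilinMap_sub_self B z x v).const_mul (1 / 2))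
  have hzero := hmin.hasLineDerivAt_eq_zero hderiv (by simp)
  have hsymm : B v (x - z) = B (x - z) v := (hB.eq (x - z) v).symm
  simp only [LinearMap.add_apply, LinearMap.zero_apply]
  linarith

/-- First-order strong convexity of `f` relative to a quadratic form `Q`, where `f' x` is the
derivative (or any subgradient) of `f` at `x`. The usual `m`-strong convexity is the case
`Q v = m ‖v‖²`; using a quadratic form avoids choosing a norm on `E`. -/
def StronglyConvexRelTo (Q : QuadraticForm ℝ E) (f : E → ℝ) (f' : E → Module.Dual ℝ E) : Prop :=
  ∀ x y, f x + f' x (y - x) + 1 / 2 * Q (y - x) ≤ f y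

theorem StronglyConvexRelTo.le_sub_apply_sub {Q : QuadraticForm ℝ E} {f : E → ℝ}
    {f' : E → Module.Dual ℝ E} (h : StronglyConvexRelTo Q f f') (x y : E) :
    Q (x - y) ≤ (f' x - f' y) (x - y) := by
  have hxy := h x y
  have hyx := h y x
  rw [← neg_sub x y, map_neg, QuadraticMap.map_neg] at hxy
  rw [LinearMap.sub_apply]
  linarith

theorem proximal_residual_apply_le_neg {Q : QuadraticForm ℝ E} {f : E → ℝ}
    {f' : E → Module.Dual ℝ E} (hf : StronglyConvexRelTo Q f f')
    {ℓ ℓstar : Module.Dual ℝ E} {B : LinearMap.BilinForm ℝ E} (hB : B.IsSymm) {z x zstar : E}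
    (hderiv : ∀ v, HasLineDerivAt ℝ f (f' x v) x v) (hstar : f' zstar + ℓstar = 0)
    (hmin : IsMinOn (fun y => f y + ℓ y + 1 / 2 * B (y - z) (y - z)) Set.univ x) :
    (ℓ - ℓstar + B (x - z)) (x - zstar) ≤ -Q (x - zstar) := by
  have hresidual : ℓ - ℓstar + B (x - z) = -(f' x - f' zstar) := by
    rw [eq_neg_of_add_eq_zero_right hstar, ← sub_eq_zero,
      ← stationary_of_isMinOn_proximal hB hderiv hmin]
    abel
  rw [hresidual, LinearMap.neg_apply]
  exact neg_le_neg (hf.le_sub_apply_sub x zstar)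

theorem stmt_12_general {κ : Type*} (s : Finset κ) {Q : κ → QuadraticForm ℝ E}
    {f : κ → E → ℝ} {f' : κ → E → Module.Dual ℝ E}
    (hf : ∀ i ∈ s, StronglyConvexRelTo (Q i) (f i) (f' i))
    {lam lamstar : κ → Module.Dual ℝ E} {zstar : E} (hstar : ∀ i ∈ s, f' i zstar + lamstar i = 0)
    {B : κ → LinearMap.BilinForm ℝ E} (hB : ∀ i ∈ s, (B i).IsSymm) {z : E} {xp : κ → E}
    (hderiv : ∀ i ∈ s, ∀ v, HasLineDerivAt ℝ (f i) (f' i (xp i) v) (xp i) v)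
    (hmin : ∀ i ∈ s,
      IsMinOn (fun y => f i y + lam i y + 1 / 2 * B i (y - z) (y - z)) Set.univ (xp i)) :
    ∑ i ∈ s, (lam i - lamstar i + B i (xp i - z)) (xp i - zstar)
      ≤ -∑ i ∈ s, Q i (xp i - zstar) := by
  rw [← sum_neg_distrib]
  exact sum_le_sum fun i hi =>
    proximal_residual_apply_le_neg (hf i hi) (hB i hi) (hderiv i hi) (hstar i hi) (hmin i hi)

end Proximal

section Coordinates

variable {ι : Type*} [Fintype ι]

theorem toBilin'_apply_of_isSymm {R : Type*} [CommRing R] [DecidableEq ι] {M : Matrix ι ι R}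
    (hM : M.IsSymm) (v w : ι → R) : M.toBilin' v w = (M *ᵥ v) ⬝ᵥ w := by
  rw [toBilin'_apply', dotProduct_mulVec, ← mulVec_transpose, hM.eq]

theorem stronglyConvexRelTo_smul_dotProduct_iff {m : ℝ} {f : (ι → ℝ) → ℝ}
    {gradf : (ι → ℝ) → ι → ℝ} :
    StronglyConvexRelTo (m • LinearMap.BilinMap.toQuadraticMap (dotProductBilin ℝ ℝ)) f
        (fun x => dotProductBilin ℝ ℝ (gradf x)) ↔
      ∀ x y, f x + gradf x ⬝ᵥ (y - x) + m / 2 * ((y - x) ⬝ᵥ (y - x)) ≤ f y := by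
  simp only [StronglyConvexRelTo, _root_.smul_apply, LinearMap.BilinMap.toQuadraticMap_apply,
    dotProductBilin_apply_apply, smul_eq_mul, ← mul_assoc, one_div_mul_eq_div]

end Coordinates

/-- Let `f₁, …, f_N` be differentiable and `m`-strongly convex (`m > 0`),
`(z*, λ*)` a KKT point of the consensus problem, `B₁, …, B_N` symmetric positive definite,
and `λᵢ, z ∈ ℝⁿ`. If each `xᵢ⁺` is the global minimizer of
`x ↦ fᵢ(x) + λᵢᵀx + ½‖x − z‖²_{Bᵢ}`, then
`Σᵢ (λᵢ − λᵢ* + Bᵢ(xᵢ⁺ − z))ᵀ(xᵢ⁺ − z*) ≤ −m Σᵢ ‖xᵢ⁺ − z*‖²`. -/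
theorem stmt_12 {n N : ℕ} (hN : 0 < N) (m : ℝ) (hm : 0 < m)
    (f : Fin N → (Fin n → ℝ) → ℝ)
    (gradf : Fin N → (Fin n → ℝ) → (Fin n → ℝ))
    (hdiff : ∀ i, Differentiable ℝ (f i))
    (hgrad : ∀ i x y, fderiv ℝ (f i) x y = gradf i x ⬝ᵥ y)
    -- m-strong convexity: f(y) ≥ f(x) + ∇f(x)ᵀ(y − x) + (m/2)‖y − x‖²
    (hsc : ∀ i x y, f i x + gradf i x ⬝ᵥ (y - x) + m / 2 * ((y - x) ⬝ᵥ (y - x)) ≤ f i y)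
    -- KKT point (z*, λ*)
    (zstar : Fin n → ℝ) (lamstar : Fin N → Fin n → ℝ)
    (hKKT1 : ∀ i, gradf i zstar + lamstar i = 0)
    (hKKT2 : ∑ i, lamstar i = 0)
    (B : Fin N → Matrix (Fin n) (Fin n) ℝ)
    (hB : ∀ i, (B i).PosDef)
    (lam : Fin N → Fin n → ℝ) (z : Fin n → ℝ)
    (xp : Fin N → Fin n → ℝ)
    (hxp : ∀ i x, f i (xp i) + lam i ⬝ᵥ xp i
          + (1 / 2 : ℝ) * ((xp i - z) ⬝ᵥ ((B i) *ᵥ (xp i - z)))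
        ≤ f i x + lam i ⬝ᵥ x + (1 / 2 : ℝ) * ((x - z) ⬝ᵥ ((B i) *ᵥ (x - z)))) :
    ∑ i, ((lam i - lamstar i + (B i) *ᵥ (xp i - z)) ⬝ᵥ (xp i - zstar))
      ≤ -m * ∑ i, ((xp i - zstar) ⬝ᵥ (xp i - zstar)) := by
  have hBsymm (i) : (B i).IsSymm := (hB i).isHermitian
  have hsum := stmt_12_general univ
    (lam := fun i => dotProductBilin ℝ ℝ (lam i))
    (lamstar := fun i => dotProductBilin ℝ ℝ (lamstar i)) (B := fun i => (B i).toBilin')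
    (fun i _ => stronglyConvexRelTo_smul_dotProduct_iff.2 (hsc i))
    (fun i _ => by rw [← map_add, hKKT1, map_zero])
    (fun i _ => isSymm_toBilin'_iff_isSymm.2 (hBsymm i))
    (fun i _ v => hgrad i (xp i) v ▸ (hdiff i (xp i)).hasFDerivAt.hasLineDerivAt v)
    (fun i _ => isMinOn_univ_iff.2 fun x => by
      simpa only [toBilin'_apply', dotProductBilin_apply_apply] using hxp i x)
  simpa only [LinearMap.add_apply, LinearMap.sub_apply, dotProductBilin_apply_apply,
    toBilin'_apply_of_isSymm (hBsymm _), ← sub_dotProduct, ← add_dotProduct, _root_.smul_apply,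
    LinearMap.BilinMap.toQuadraticMap_apply, smul_eq_mul, ← mul_sum, ← neg_mul] using hsum
end
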